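/- arXiv:1009.5051 — 2 statements merged into one kernel-verified Lean document; each statement's English description precedes it below -/
import Mathlib

section
/- Every finitely generated nilpotent group that is not virtually cyclic has exponential geodesic growth with respect to every finite symmetric generating set. -/
/-- A word `w` over the alphabet `X ⊆ G` is geodesic if its letters lie in `X` and no
shorter word over `X` represents the same element of `G`. -/
def IsGeodesicWord {G : Type*} [Group G] (X : Set G) (w : List G) : Prop :=
  (∀ a ∈ w, a ∈ X) ∧
    ∀ w' : List G, (∀ a ∈ w', a ∈ X) → w'.prod = w.prod → w.length ≤ w'.length

/-- The geodesic growth function: the number of geodesic words over `X` of length at most `n`. -/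
noncomputable def geodesicGrowth {G : Type*} [Group G] (X : Set G) (n : ℕ) : ℕ :=
  Set.ncard {w : List G | IsGeodesicWord X w ∧ w.length ≤ n}

/-- The word growth function: the number of elements of `G` represented by some word over `X`
of length at most `n`. -/
noncomputable def wordGrowth {G : Type*} [Group G] (X : Set G) (n : ℕ) : ℕ :=
  Set.ncard {g : G | ∃ w : List G, (∀ a ∈ w, a ∈ X) ∧ w.prod = g ∧ w.length ≤ n}

/-!
Suppose a character `φ : G → ℤ` attains its maximum over `X` at two distinct letters `x` and `y`,
and that this maximum `m` is positive. Words of length `k` over `X` take values at most `k * m`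
under `φ`, so every word in `x` and `y` is geodesic; this gives `2 ^ n` geodesics of length `n`.

Such a character exists as soon as no `⟨t⟩[G, G]` has finite index: take `f` positive somewhere on
`X`, let `x` maximize `f`, take `g` killing `x` and positive somewhere on `X`, and add multiples of
`g` to `f` until a second letter ties with `x`.

Finally, if `G` is nilpotent and `⟨t⟩[G, G]` has finite index, then `[G, G]` is finite, so `⟨t⟩` has
finite index and `G` is virtually cyclic. By induction on the nilpotency class the image of `⟨t⟩` in
`G / Z(G)` has finite index, so its preimage `A` is abelian of finite index in `G`. The transfer
`G → A` raises central elements to the power `[G : A]` and kills commutators, so `Z(G) ∩ [G, G]` is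
a torsion subgroup of the finitely generated abelian group `A`, hence finite.
-/

section Nilpotent

variable {G : Type*} [Group G]

open Subgroup
open scoped IsMulCommutative

theorem finiteIndex_of_finiteIndex_sup_of_finite (H N : Subgroup G) [N.Normal] [Finite N]
    [(H ⊔ N).FiniteIndex] : H.FiniteIndex := by
  have hsurj : Function.Surjective fun n : N ↦
      (QuotientGroup.mk (inclusion le_sup_right n) : ↥(H ⊔ N) ⧸ H.subgroupOf (H ⊔ N)) := by
    rintro ⟨g, hg⟩
    obtain ⟨n, hn, k, hk, rfl⟩ := mem_sup_of_normal_left.1 (sup_comm H N ▸ hg)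
    exact ⟨⟨n, hn⟩, QuotientGroup.eq.2 (by simpa [mem_subgroupOf] using hk)⟩
  have := Finite.of_surjective _ hsurj
  rw [finiteIndex_iff, ← relIndex_mul_index (le_sup_left : H ≤ H ⊔ N)]
  exact mul_ne_zero index_ne_zero_of_finite FiniteIndex.index_ne_zero

theorem pow_index_eq_one_of_mem_center_of_mem_commutator (A : Subgroup G) [IsMulCommutative A]
    [A.FiniteIndex] {c : G} (hc : c ∈ center G) (hc' : c ∈ commutator G) : c ^ A.index = 1 := by
  have htransfer := MonoidHom.transfer_eq_pow (MonoidHom.id A) c fun k g _ ↦ by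
    rw [mul_assoc, ← mem_center_iff.1 (pow_mem hc k) g, inv_mul_cancel_left]
  rw [Abelianization.commutator_subset_ker _ hc'] at htransfer
  exact congrArg Subtype.val htransfer.symm

theorem finite_torsion_of_fg (A : Type*) [CommGroup A] [Group.FG A] :
    Finite (CommGroup.torsion A) := by
  have : Module.Finite ℤ (Additive A) := Module.Finite.iff_addGroup_fg.2 inferInstance
  let T : Submodule ℤ (Additive A) := (CommGroup.torsion A).toAddSubgroup.toIntSubmodule
  have : Group.FG (CommGroup.torsion A) :=
    GroupFG.iff_add_fg.2 (Module.Finite.iff_addGroup_fg.1 (inferInstance : Module.Finite ℤ T))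
  exact CommGroup.finite_of_fg_isMulTorsion _ fun a ↦ Submonoid.isOfFinOrder_coe.1 a.2

theorem finite_center_inf_commutator [Group.FG G] (A : Subgroup G) [IsMulCommutative A]
    [A.FiniteIndex] (hA : center G ≤ A) : Finite ↥(center G ⊓ commutator G) := by
  have := finite_torsion_of_fg A
  have hmem (c : ↥(center G ⊓ commutator G)) :
      inclusion (inf_le_left.trans hA) c ∈ CommGroup.torsion A :=
    isOfFinOrder_iff_pow_eq_one.2 ⟨A.index, Nat.pos_of_ne_zero FiniteIndex.index_ne_zero,
      Subtype.ext (pow_index_eq_one_of_mem_center_of_mem_commutator A c.2.1 c.2.2)⟩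
  exact Finite.of_injective (fun c ↦ (⟨_, hmem c⟩ : CommGroup.torsion A)) fun c d hcd ↦
    inclusion_injective _ (congrArg Subtype.val hcd)

theorem isMulCommutative_comap_mk'_center (C : Subgroup (G ⧸ center G)) [IsCyclic C] :
    IsMulCommutative (C.comap (QuotientGroup.mk' (center G))) := by
  let π := QuotientGroup.mk' (center G)
  refine (π.subgroupComap C).isMulCommutative_of_isCyclic_of_ker_le_center
    fun a ha ↦ mem_center_iff.2 fun b ↦ Subtype.ext ?_
  have ha' : (a : G) ∈ center G := (QuotientGroup.eq_one_iff _).1 (congrArg Subtype.val ha)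
  exact mem_center_iff.1 ha' b

theorem finite_of_finite_ker_inf_of_finite_map {H : Type*} [Group H] (f : G →* H) (K : Subgroup G)
    [Finite ↥(f.ker ⊓ K)] [Finite (K.map f)] : Finite K := by
  refine (f.subgroupMap K).finite_iff_finite_ker_range.2 ⟨?_, inferInstance⟩
  have hker (k : (f.subgroupMap K).ker) : (k : G) ∈ f.ker ⊓ K :=
    ⟨congrArg Subtype.val k.2, k.1.2⟩
  exact Finite.of_injective (fun k ↦ (⟨_, hker k⟩ : ↥(f.ker ⊓ K))) fun k l hkl ↦
    Subtype.ext (Subtype.ext (congrArg (fun c : ↥(f.ker ⊓ K) ↦ (c : G)) hkl))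

theorem map_commutator_of_surjective {H : Type*} [Group H] {f : G →* H}
    (hf : Function.Surjective f) : (commutator G).map f = commutator H := by
  rw [map_commutator_eq, MonoidHom.range_eq_top.2 hf, commutator_def]

theorem finite_commutator_of_finite_commutator_quotient_center [Group.FG G]
    [Finite (commutator (G ⧸ center G))] (C : Subgroup (G ⧸ center G)) [IsCyclic C]
    [C.FiniteIndex] : Finite (commutator G) := by
  let π := QuotientGroup.mk' (center G)
  have hπ : Function.Surjective π := QuotientGroup.mk'_surjective _
  have hker : π.ker = center G := QuotientGroup.ker_mk' _
  have := isMulCommutative_comap_mk'_center C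
  have : (C.comap π).FiniteIndex :=
    ⟨(index_comap_of_surjective C hπ).trans_ne FiniteIndex.index_ne_zero⟩
  have : Finite ↥(π.ker ⊓ commutator G) := by
    rw [hker]
    exact finite_center_inf_commutator (C.comap π) (hker.ge.trans (ker_le_comap π C))
  have : Finite ((commutator G).map π) := map_commutator_of_surjective hπ ▸ inferInstance
  exact finite_of_finite_ker_inf_of_finite_map π _

theorem finite_commutator_of_finiteIndex_zpowers_sup_commutator (G : Type*) [Group G]
    [Group.IsNilpotent G] :
    Group.FG G → ∀ t : G, (zpowers t ⊔ commutator G).FiniteIndex → Finite (commutator G) := by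
  refine Group.nilpotent_center_quotient_ind (P := fun G _ _ ↦ Group.FG G →
    ∀ t : G, (zpowers t ⊔ commutator G).FiniteIndex → Finite (commutator G)) G ?_ ?_
  · intros
    infer_instance
  · intro G _ _ ih _ t ht
    let π := QuotientGroup.mk' (center G)
    have hπ : Function.Surjective π := QuotientGroup.mk'_surjective _
    have : (zpowers (π t) ⊔ commutator (G ⧸ center G)).FiniteIndex := by
      rw [← MonoidHom.map_zpowers, ← map_commutator_of_surjective hπ, ← Subgroup.map_sup]
      exact ⟨ne_zero_of_dvd_ne_zero ht.index_ne_zero (index_map_dvd _ hπ)⟩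
    have := ih inferInstance (π t) this
    have := finiteIndex_of_finiteIndex_sup_of_finite (zpowers (π t)) (commutator (G ⧸ center G))
    exact finite_commutator_of_finite_commutator_quotient_center (zpowers (π t))

theorem finiteIndex_zpowers_of_finiteIndex_zpowers_sup_commutator [Group.IsNilpotent G]
    [Group.FG G] {t : G} (ht : (zpowers t ⊔ commutator G).FiniteIndex) :
    (zpowers t).FiniteIndex := by
  have := finite_commutator_of_finiteIndex_zpowers_sup_commutator G inferInstance t ht
  exact finiteIndex_of_finiteIndex_sup_of_finite _ (commutator G)

end Nilpotent

section Characters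

theorem exists_addMonoidHom_int_ne_zero (A : Type*) [AddCommGroup A] [AddGroup.FG A] [Infinite A] :
    ∃ f : A →+ ℤ, f ≠ 0 := by
  have : Module.Finite ℤ A := Module.Finite.iff_addGroup_fg.2 inferInstance
  obtain ⟨a, ha⟩ : ∃ a, a ∉ Submodule.torsion ℤ A := by
    by_contra! htorsion
    exact not_finite_iff_infinite.2 ‹_› (Module.finite_of_fg_torsion A fun {a} ↦ htorsion a)
  obtain ⟨f, hf⟩ := Module.Projective.exists_dual_ne_zero ℤ
    (mt (Submodule.Quotient.mk_eq_zero _).1 ha)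
  exact ⟨(f ∘ₗ (Submodule.torsion ℤ A).mkQ).toAddMonoidHom, fun h ↦ hf (DFunLike.congr_fun h a)⟩

theorem exists_monoidHom_int_ne_one (A : Type*) [CommGroup A] [Group.FG A] [Infinite A] :
    ∃ f : A →* Multiplicative ℤ, f ≠ 1 := by
  obtain ⟨f, hf⟩ := exists_addMonoidHom_int_ne_zero (Additive A)
  exact ⟨AddMonoidHom.toMultiplicativeRight f,
    fun h ↦ hf (AddMonoidHom.toMultiplicativeRight.injective h)⟩

open scoped IsMulCommutative in
theorem exists_monoidHom_int_ne_one_of_not_finiteIndex {G : Type*} [Group G] [Group.FG G]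
    (N : Subgroup G) (hN : commutator G ≤ N) (hindex : ¬ N.FiniteIndex) :
    ∃ f : G →* Multiplicative ℤ, N ≤ f.ker ∧ f ≠ 1 := by
  have : N.Normal := Subgroup.Normal.of_commutator_le G hN
  have := Subgroup.Normal.quotient_commutative_iff_commutator_le.2 hN
  have : Infinite (G ⧸ N) := not_finite_iff_infinite.1 fun _ ↦
    hindex Subgroup.finiteIndex_of_finite_quotient
  obtain ⟨f, hf⟩ := exists_monoidHom_int_ne_one (G ⧸ N)
  refine ⟨f.comp (QuotientGroup.mk' N), fun a ha ↦ ?_,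
    fun h ↦ hf (QuotientGroup.monoidHom_ext N h)⟩
  rw [MonoidHom.mem_ker, MonoidHom.comp_apply, QuotientGroup.mk'_apply,
    (QuotientGroup.eq_one_iff a).2 ha, map_one]

end Characters

section GeodesicGrowth

variable {G : Type*} [Group G]

theorem finite_setOf_isGeodesicWord_length_le {X : Set G} (hX : X.Finite) (n : ℕ) :
    {w | IsGeodesicWord X w ∧ w.length ≤ n}.Finite := by
  have := hX.to_subtype
  refine ((List.finite_length_le X n).image (List.map Subtype.val)).subset ?_
  rintro w ⟨hw, hn⟩
  lift w to List X using hw.1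
  exact ⟨w, by simpa using hn, rfl⟩

theorem card_pow_le_geodesicGrowth {X : Set G} (hX : X.Finite) (s : Finset G)
    (hs : ∀ w : List G, (∀ a ∈ w, a ∈ s) → IsGeodesicWord X w) (n : ℕ) :
    s.card ^ n ≤ geodesicGrowth X n := by
  let word (v : Fin n → s) : List G := List.ofFn fun i ↦ (v i : G)
  have hword : Function.Injective word := fun v v' h ↦
    funext fun i ↦ Subtype.ext (congrFun (List.ofFn_injective h) i)
  calc s.card ^ n = (Set.range word).ncard := by
        rw [← Nat.card_coe_set_eq, Nat.card_range_of_injective hword]; simp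
    _ ≤ geodesicGrowth X n := by
        refine Set.ncard_le_ncard ?_ (finite_setOf_isGeodesicWord_length_le hX n)
        rintro _ ⟨v, rfl⟩
        exact ⟨hs _ (List.forall_mem_ofFn_iff.2 fun i ↦ (v i).2), List.length_ofFn.le⟩

theorem isGeodesicWord_of_forall_apply_eq {M : Type*} [CommGroup M] [LinearOrder M]
    [IsOrderedMonoid M] (φ : G →* M) {m : M} (hm : 1 < m) {X : Set G} (hX : ∀ a ∈ X, φ a ≤ m)
    {w : List G} (hwX : ∀ a ∈ w, a ∈ X) (hwm : ∀ a ∈ w, φ a = m) : IsGeodesicWord X w := by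
  refine ⟨hwX, fun w' hw' hprod ↦ (pow_le_pow_iff_right' hm).1 ?_⟩
  calc m ^ w.length = φ w.prod := by
        rw [map_list_prod, List.prod_eq_pow_card _ m (by simpa using hwm), List.length_map]
    _ = (w'.map φ).prod := by rw [← hprod, map_list_prod]
    _ ≤ m ^ w'.length := by
        simpa using List.prod_le_pow_card (w'.map φ) m (by simpa using fun a ha ↦ hX a (hw' a ha))

/- Among the `y` with `0 < g y`, minimize the slope `(m - f y) / g y`: this is the first multiple of
`g` whose addition to `f` brings a point up to the level `m`. -/
theorem exists_min_slope {α : Type*} {s : Finset α} (f g : α → ℤ) {m : ℤ} (hf : ∀ z ∈ s, f z ≤ m)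
    (hg : ∃ y ∈ s, 0 < g y) :
    ∃ y ∈ s, 0 < g y ∧ ∀ z ∈ s, g y * f z + (m - f y) * g z ≤ g y * m := by
  obtain ⟨y, hy, hmin⟩ := Finset.exists_min_image {y ∈ s | 0 < g y}
    (fun y ↦ ((m - f y : ℤ) : ℚ) / g y) (by simpa [Finset.Nonempty] using hg)
  simp only [Finset.mem_filter, and_imp] at hy hmin
  refine ⟨y, hy.1, hy.2, fun z hz ↦ ?_⟩
  rcases le_or_gt (g z) 0 with hgz | hgz
  · nlinarith [hf y hy.1, hf z hz]
  · have hratio := hmin z hz hgz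
    rw [div_le_div_iff₀ (mod_cast hy.2) (mod_cast hgz)] at hratio
    norm_cast at hratio
    linarith

theorem exists_monoidHom_int_one_lt {X : Finset G} (hX : Subgroup.closure (X : Set G) = ⊤) {t : G}
    (ht : ¬ (Subgroup.zpowers t ⊔ commutator G).FiniteIndex) :
    ∃ f : G →* Multiplicative ℤ, f t = 1 ∧ ∃ x ∈ X, 1 < f x := by
  have : Group.FG G := ⟨X, hX⟩
  obtain ⟨f, hker, hf⟩ := exists_monoidHom_int_ne_one_of_not_finiteIndex _ le_sup_right ht
  have hft : f t = 1 := hker (Subgroup.mem_sup_left (Subgroup.mem_zpowers t))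
  obtain ⟨x, hx, hfx⟩ : ∃ x ∈ X, f x ≠ 1 := by
    by_contra! h
    exact hf (MonoidHom.eq_of_eqOn_dense hX h)
  rcases hfx.lt_or_gt with hlt | hgt
  · exact ⟨f⁻¹, by simp [hft], x, hx, by simpa using hlt⟩
  · exact ⟨f, hft, x, hx, hgt⟩

theorem exists_monoidHom_int_two_maximizers {X : Finset G}
    (hX : Subgroup.closure (X : Set G) = ⊤)
    (h : ∀ t : G, ¬ (Subgroup.zpowers t ⊔ commutator G).FiniteIndex) :
    ∃ φ : G →* Multiplicative ℤ, ∃ x ∈ X, ∃ y ∈ X,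
      x ≠ y ∧ φ y = φ x ∧ 1 < φ x ∧ ∀ z ∈ X, φ z ≤ φ x := by
  obtain ⟨f, -, x', hx', hfx'⟩ := exists_monoidHom_int_one_lt hX (h 1)
  obtain ⟨x, hx, hmax⟩ := X.exists_max_image f ⟨x', hx'⟩
  obtain ⟨g, hgx, hg⟩ := exists_monoidHom_int_one_lt hX (h x)
  obtain ⟨y, hy, hgy, hslope⟩ :=
    exists_min_slope (fun z ↦ (f z).toAdd) (fun z ↦ (g z).toAdd) hmax hg
  let φ : G →* Multiplicative ℤ := f ^ (g y).toAdd * g ^ ((f x).toAdd - (f y).toAdd)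
  have hφ (z : G) : (φ z).toAdd =
      (g y).toAdd * (f z).toAdd + ((f x).toAdd - (f y).toAdd) * (g z).toAdd := by
    simp [φ]
  have hφx : (φ x).toAdd = (g y).toAdd * (f x).toAdd := by simp [hφ, hgx]
  refine ⟨φ, x, hx, y, hy, ?_, Multiplicative.toAdd.injective ?_, ?_, fun z hz ↦ ?_⟩
  · rintro rfl
    simp [hgx] at hgy
  · rw [hφ, hφx]
    ring
  · rw [← Multiplicative.toAdd_lt, hφx]
    exact mul_pos hgy (hfx'.trans_le (hmax x' hx'))
  · rw [← Multiplicative.toAdd_le, hφ, hφx]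
    exact hslope z hz

theorem two_pow_le_geodesicGrowth {X : Finset G} (hX : Subgroup.closure (X : Set G) = ⊤)
    (h : ∀ t : G, ¬ (Subgroup.zpowers t ⊔ commutator G).FiniteIndex) (n : ℕ) :
    2 ^ n ≤ geodesicGrowth (X : Set G) n := by
  classical
  obtain ⟨φ, x, hx, y, hy, hxy, hφxy, hpos, hmax⟩ := exists_monoidHom_int_two_maximizers hX h
  have hpair : ∀ a ∈ ({x, y} : Finset G), a ∈ X ∧ φ a = φ x := by simp [hx, hy, hφxy]
  rw [← Finset.card_pair hxy]
  exact card_pow_le_geodesicGrowth X.finite_toSet {x, y} (fun w hw ↦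
    isGeodesicWord_of_forall_apply_eq φ hpos hmax (fun a ha ↦ (hpair a (hw a ha)).1)
      fun a ha ↦ (hpair a (hw a ha)).2) n

end GeodesicGrowth

theorem nilpotent_not_virtually_cyclic_exponential_geodesic_growth_general
    {G : Type*} [Group G] [Group.IsNilpotent G]
    (h : ¬ ∃ H : Subgroup G, IsCyclic H ∧ H.FiniteIndex)
    (X : Finset G) (hgen : Subgroup.closure (X : Set G) = ⊤) (n : ℕ) :
    2 ^ n ≤ geodesicGrowth (X : Set G) n := by
  have : Group.FG G := ⟨X, hgen⟩
  exact two_pow_le_geodesicGrowth hgen (fun t ht ↦ h ⟨Subgroup.zpowers t, inferInstance,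
    finiteIndex_zpowers_of_finiteIndex_zpowers_sup_commutator ht⟩) n

theorem nilpotent_not_virtually_cyclic_exponential_geodesic_growth
    {G : Type*} [Group G] [Group.FG G] [Group.IsNilpotent G]
    (h : ¬ ∃ H : Subgroup G, IsCyclic H ∧ H.FiniteIndex)
    (X : Finset G) (hsym : ∀ g ∈ X, g⁻¹ ∈ X)
    (hgen : Subgroup.closure (X : Set G) = ⊤) :
    ∃ b : ℝ, 1 < b ∧ ∀ n : ℕ, b ^ n ≤ (geodesicGrowth (X : Set G) n : ℝ) :=
  ⟨2, one_lt_two, fun n ↦ mod_cast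
    nilpotent_not_virtually_cyclic_exponential_geodesic_growth_general h X hgen n⟩
end

section
/- Let G be a finitely generated group containing an element x whose normal closure A = ⟪x⟫ is abelian and of finite index in G. Then there exists a finite symmetric generating set X for G such that the geodesic growth function Γ_{G,X}(n) is bounded above by a polynomial in n. -/
/-!
On the abelian group `A = ⟪x⟫` the word length with respect to the conjugates of `x` and `x⁻¹` is
invariant under conjugation by `G`. Take any finite symmetric generating set, let `C` bound the
lengths in `A` of the cocycle of right multiplication by its letters on `A`-cosets, and adjoin
`y = x ^ N` and `y⁻¹` with `N > 2 * C`. Pushing the `A`-parts to the left, a word with `m` letters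
`y` or `y⁻¹` and `k` other letters represents `e ^ N * f * t`, where `e` has length at most `m`,
`f` has length at most `k * C`, and `t` is a coset representative. Division by `N` turns `f` into
`q ^ N * r` with `q` of length at most `k * C / N ≤ k / 2` and `r` bounded. Collecting conjugates
of `x`, the element `(e * q) ^ N` costs at most `m + k / 2` letters `y` or `y⁻¹`, up to a constant.
So a geodesic has `m + k ≤ m + k / 2 + O(1)`, and `k` is bounded. Between two of these `k` letters
a geodesic is a power of `y` or of `y⁻¹`, which leaves polynomially many geodesics.
-/

open scoped Pointwise IsMulCommutative

section WordBall

/-- The ball of radius `n` about the identity in the word metric of `X`, with words over `X` itself: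
inverses of letters are not letters. -/
def wordBall {M : Type*} [Monoid M] (X : Set M) (n : ℕ) : Set M :=
  {g | ∃ w : List M, (∀ a ∈ w, a ∈ X) ∧ w.prod = g ∧ w.length ≤ n}

section Monoid

variable {M M' : Type*} [Monoid M] [Monoid M'] {X : Set M} {a b : M} {m n : ℕ}

theorem one_mem_wordBall : (1 : M) ∈ wordBall X n :=
  ⟨[], by simp, rfl, Nat.zero_le n⟩

theorem mem_wordBall_one_of_mem (ha : a ∈ X) : a ∈ wordBall X 1 :=
  ⟨[a], by simpa using ha, by simp, by simp⟩

theorem pow_mem_wordBall (ha : a ∈ X) (n : ℕ) : a ^ n ∈ wordBall X n :=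
  ⟨List.replicate n a, fun _ hb => List.eq_of_mem_replicate hb ▸ ha, List.prod_replicate n a,
    List.length_replicate.le⟩

theorem wordBall_mono (X : Set M) : Monotone (wordBall X) :=
  fun _ _ hmn _ ⟨w, hw, hprod, hlen⟩ => ⟨w, hw, hprod, hlen.trans hmn⟩

theorem mul_mem_wordBall (ha : a ∈ wordBall X m) (hb : b ∈ wordBall X n) :
    a * b ∈ wordBall X (m + n) := by
  obtain ⟨u, hu, rfl, hum⟩ := ha
  obtain ⟨v, hv, rfl, hvn⟩ := hb
  exact ⟨u ++ v, List.forall_mem_append.2 ⟨hu, hv⟩, List.prod_append,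
    List.length_append.trans_le (add_le_add hum hvn)⟩

theorem map_mem_wordBall {Y : Set M'} (f : M →* M') (hf : ∀ b ∈ X, f b ∈ wordBall Y m)
    (ha : a ∈ wordBall X n) : f a ∈ wordBall Y (n * m) := by
  obtain ⟨w, hw, rfl, hlen⟩ := ha
  refine wordBall_mono Y (Nat.mul_le_mul_right m hlen) ?_
  induction w with
  | nil => simpa using one_mem_wordBall
  | cons b w ih =>
    obtain ⟨hb, hw⟩ := List.forall_mem_cons.1 hw
    rw [List.prod_cons, map_mul, List.length_cons, Nat.succ_mul, Nat.add_comm]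
    exact mul_mem_wordBall (hf b hb) (ih hw (Nat.le_of_succ_le hlen))

end Monoid

section CommMonoid

variable {M M' : Type*} [CommMonoid M] [Monoid M'] {a : M} {m : ℕ}

theorem map_prod_mem_wordBall {ι : Type*} {Y : Set M'} (f : M →* M') (s : Finset ι) (g : ι → M)
    (l : ι → ℕ) (h : ∀ i ∈ s, f (g i) ∈ wordBall Y (l i)) :
    f (∏ i ∈ s, g i) ∈ wordBall Y (∑ i ∈ s, l i) := by
  induction s using Finset.cons_induction with
  | empty => simpa using one_mem_wordBall
  | cons i s hi ih =>
    rw [Finset.prod_cons, Finset.sum_cons, map_mul]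
    exact mul_mem_wordBall (h i (Finset.mem_cons_self i s))
      (ih fun j hj => h j (Finset.mem_cons_of_mem hj))

theorem exists_prod_pow_eq_of_mem_wordBall {s : Finset M} (ha : a ∈ wordBall (s : Set M) m) :
    ∃ e : M → ℕ, ∑ b ∈ s, e b ≤ m ∧ ∏ b ∈ s, b ^ e b = a := by
  classical
  obtain ⟨w, hw, rfl, hlen⟩ := ha
  refine ⟨fun b => w.count b, ?_, ?_⟩
  · simpa only [Multiset.coe_count, Multiset.coe_card] using
      (Multiset.sum_count_eq_card (m := (w : Multiset M)) hw).trans_le hlen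
  · exact (Finset.prod_list_count_of_subset w s fun b hb => hw b (List.mem_toFinset.1 hb)).symm

theorem exists_pow_mul_eq_of_mem_wordBall {s : Finset M} {N : ℕ} (hN : 0 < N)
    (ha : a ∈ wordBall (s : Set M) m) :
    ∃ q ∈ wordBall (s : Set M) (m / N), ∃ r ∈ wordBall (s : Set M) (s.card * N),
      q ^ N * r = a := by
  obtain ⟨e, hsum, rfl⟩ := exists_prod_pow_eq_of_mem_wordBall ha
  have prod_mem (l : M → ℕ) : ∏ b ∈ s, b ^ l b ∈ wordBall (s : Set M) (∑ b ∈ s, l b) :=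
    map_prod_mem_wordBall (MonoidHom.id M) s _ l fun b hb => pow_mem_wordBall hb (l b)
  refine ⟨_, wordBall_mono _ ?_ (prod_mem fun b => e b / N),
    _, wordBall_mono _ ?_ (prod_mem fun b => e b % N), ?_⟩
  · rw [Nat.le_div_iff_mul_le hN, Finset.sum_mul]
    exact (Finset.sum_le_sum fun b _ => Nat.div_mul_le_self (e b) N).trans hsum
  · exact Finset.sum_le_card_nsmul s _ N fun b _ => (Nat.mod_lt (e b) hN).le
  · simp only [← Finset.prod_pow, ← Finset.prod_mul_distrib, ← pow_mul, ← pow_add,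
      Nat.div_add_mod']

end CommMonoid

theorem eventually_mem_wordBall {G : Type*} [Group G] {X : Set G} (hinv : X⁻¹ = X)
    (hgen : Subgroup.closure X = ⊤) (g : G) : ∀ᶠ n in Filter.atTop, g ∈ wordBall X n := by
  have hg : g ∈ Submonoid.closure X := by
    rw [← Set.union_self X, ← congrArg (X ∪ ·) hinv, ← Subgroup.closure_toSubmonoid, hgen]
    exact Subgroup.mem_top g
  obtain ⟨w, hw, hprod⟩ := Submonoid.exists_list_of_mem_closure hg
  filter_upwards [Filter.eventually_ge_atTop w.length] with n hn using ⟨w, hw, hprod, hn⟩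

end WordBall

section Geodesics

instance instDecidableEqFreeMonoid {α : Type*} [DecidableEq α] : DecidableEq (FreeMonoid α) :=
  inferInstanceAs (DecidableEq (List α))

variable {G : Type*} [Group G] {X : Set G} {y : G} {u v w : List G} {n : ℕ}

theorem IsGeodesicWord.length_le (hw : IsGeodesicWord X w) (hn : w.prod ∈ wordBall X n) :
    w.length ≤ n := by
  obtain ⟨w', hw', hprod, hlen⟩ := hn
  exact (hw.2 w' hw' hprod).trans hlen

theorem IsGeodesicWord.of_infix (hw : IsGeodesicWord X w) (huw : u <:+: w) :
    IsGeodesicWord X u := by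
  obtain ⟨p, s, rfl⟩ := huw
  simp only [IsGeodesicWord, List.forall_mem_append] at hw ⊢
  refine ⟨hw.1.1.2, fun u' hu' hprod => ?_⟩
  have hlen := hw.2 (p ++ u' ++ s)
    (by simpa only [List.forall_mem_append] using ⟨⟨hw.1.1.1, hu'⟩, hw.1.2⟩)
    (by simp only [List.prod_append, hprod])
  simpa only [List.length_append, add_le_add_iff_left, add_le_add_iff_right] using hlen

theorem IsGeodesicWord.isChain_mul_ne_one (hw : IsGeodesicWord X w) :
    w.IsChain fun a b => a * b ≠ 1 := by
  refine w.isChain_isInfix.imp fun a b hab hmul => ?_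
  have hlen := (hw.of_infix hab).length_le (n := 0)
    (by simpa [hmul] using one_mem_wordBall (X := X))
  simp at hlen

theorem IsGeodesicWord.exists_eq_replicate (hw : IsGeodesicWord X w)
    (hy : ∀ a ∈ w, a = y ∨ a = y⁻¹) :
    ∃ a, (a = y ∨ a = y⁻¹) ∧ w = List.replicate w.length a := by
  have hchain : w.IsChain (· = ·) := hw.isChain_mul_ne_one.imp_of_mem_imp fun a b ha hb hab => by
    rcases hy a ha with rfl | rfl <;> rcases hy b hb with rfl | rfl <;> simp_all
  cases w with
  | nil => exact ⟨y, Or.inl rfl, rfl⟩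
  | cons a w => exact ⟨a, hy a List.mem_cons_self, List.isChain_eq_iff_eq_replicate.1 hchain a rfl⟩

variable [DecidableEq G]

/-- The number of letters of `w` other than `y` and `y⁻¹`. -/
def countOff (y : G) (w : List G) : ℕ :=
  w.countP fun a => a ≠ y ∧ a ≠ y⁻¹

/-- The words `y ^ i` and `y⁻¹ ^ i` with `i ≤ n`. Words are elements of the free monoid, so that
concatenation of sets of words is pointwise multiplication. -/
def runs (y : G) (n : ℕ) : Finset (FreeMonoid G) :=
  Finset.image₂ (fun a i => FreeMonoid.ofList (List.replicate i a)) {y, y⁻¹} (Finset.range (n + 1))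

theorem card_runs_le (y : G) (n : ℕ) : (runs y n).card ≤ 2 * (n + 1) :=
  (Finset.card_image₂_le _ _ _).trans
    (Nat.mul_le_mul Finset.card_le_two (Finset.card_range (n + 1)).le)

theorem one_mem_runs (y : G) (n : ℕ) : 1 ∈ runs y n :=
  Finset.mem_image₂.2 ⟨y, by simp, 0, by simp, rfl⟩

theorem IsGeodesicWord.ofList_mem_runs (hw : IsGeodesicWord X w) (hn : w.length ≤ n)
    (hy : ∀ a ∈ w, a = y ∨ a = y⁻¹) : FreeMonoid.ofList w ∈ runs y n := by
  obtain ⟨a, ha, hrep⟩ := hw.exists_eq_replicate hy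
  exact Finset.mem_image₂.2
    ⟨a, by simpa using ha, w.length, by simpa [Nat.lt_succ_iff] using hn, by rw [← hrep]⟩

theorem forall_mem_or_exists_eq_append_cons (y : G) (w : List G) :
    (∀ a ∈ w, a = y ∨ a = y⁻¹) ∨ ∃ u a v, w = u ++ a :: v ∧ (∀ b ∈ u, b = y ∨ b = y⁻¹) ∧
      countOff y v < countOff y w := by
  rcases hfind : w.find? (fun a => a ≠ y ∧ a ≠ y⁻¹) with - | a
  · left
    simpa only [List.find?_eq_none, decide_eq_true_eq, ← not_or, not_not] using hfind
  · obtain ⟨ha, u, v, rfl, hu⟩ := List.find?_eq_some_iff_append.1 hfind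
    refine Or.inr ⟨u, a, v, rfl, ?_, ?_⟩
    · simpa only [Bool.not_eq_true', decide_eq_false_iff_not, ← not_or, not_not] using hu
    · rw [countOff, countOff, List.countP_append,
        List.countP_cons_of_pos (p := fun a => a ≠ y ∧ a ≠ y⁻¹) ha]
      omega

/-- The words of the form `r₀ a₁ r₁ ⋯ a_k r_k` where each `rᵢ` is a run of `y` of length at
most `n` and each `aᵢ` is a letter of `X` or empty. -/
def runWords (X : Finset G) (y : G) (n k : ℕ) : Finset (FreeMonoid G) :=
  runs y n * (insert 1 (X.image FreeMonoid.of) * runs y n) ^ k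

theorem IsGeodesicWord.ofList_mem_runWords {X : Finset G} {k : ℕ}
    (hw : IsGeodesicWord (X : Set G) w) (hn : w.length ≤ n) (hk : countOff y w ≤ k) :
    FreeMonoid.ofList w ∈ runWords X y n k := by
  induction k using Nat.strong_induction_on generalizing w with | _ k ih =>
  rcases forall_mem_or_exists_eq_append_cons y w with hy | ⟨u, a, v, rfl, hu, hv⟩
  · have hone : 1 ∈ (insert 1 (X.image FreeMonoid.of) * runs y n) ^ k :=
      Finset.one_mem_pow (Finset.mul_mem_mul (Finset.mem_insert_self 1 _) (one_mem_runs y n))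
    exact mul_one (FreeMonoid.ofList w) ▸ Finset.mul_mem_mul (hw.ofList_mem_runs hn hy) hone
  · obtain ⟨k, rfl⟩ := Nat.exists_eq_succ_of_ne_zero (hv.trans_le hk).ne_bot
    rw [List.length_append, List.length_cons] at hn
    have hrun : FreeMonoid.ofList u ∈ runs y n :=
      (hw.of_infix (List.prefix_append u _).isInfix).ofList_mem_runs (by omega) hu
    have hletter : FreeMonoid.of a ∈ insert 1 (X.image FreeMonoid.of) :=
      Finset.mem_insert_of_mem (Finset.mem_image_of_mem _ (hw.1 a (by simp)))
    have hv_geodesic : IsGeodesicWord (X : Set G) v := hw.of_infix ⟨u ++ [a], [], by simp⟩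
    have htail : FreeMonoid.ofList v ∈ runWords X y n k :=
      ih k k.lt_succ_self hv_geodesic (by omega) (by omega)
    rw [FreeMonoid.ofList_append, FreeMonoid.ofList_cons, runWords, pow_succ',
      mul_assoc _ (runs y n)]
    exact Finset.mul_mem_mul hrun (Finset.mul_mem_mul hletter htail)

theorem card_runWords_le (X : Finset G) (y : G) (n k : ℕ) :
    (runWords X y n k).card ≤ 2 * (n + 1) * ((X.card + 1) * (2 * (n + 1))) ^ k := by
  have hletters : (insert 1 (X.image FreeMonoid.of)).card ≤ X.card + 1 :=
    (Finset.card_insert_le _ _).trans (Nat.succ_le_succ Finset.card_image_le)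
  calc (runWords X y n k).card
      ≤ (runs y n).card * ((insert 1 (X.image FreeMonoid.of)).card * (runs y n).card) ^ k :=
        Finset.card_mul_le.trans <| Nat.mul_le_mul_left _ <|
          Finset.card_pow_le.trans (Nat.pow_le_pow_left Finset.card_mul_le k)
    _ ≤ _ := by gcongr <;> exact card_runs_le y n

theorem geodesicGrowth_le_of_countOff_le {X : Finset G} {k : ℕ}
    (hk : ∀ w, IsGeodesicWord (X : Set G) w → countOff y w ≤ k) (hn : 1 ≤ n) :
    geodesicGrowth (X : Set G) n ≤ 4 * (4 * (X.card + 1)) ^ k * n ^ (k + 1) := by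
  have hsub : {w | IsGeodesicWord (X : Set G) w ∧ w.length ≤ n} ⊆
      FreeMonoid.ofList ⁻¹' (runWords X y n k : Set (FreeMonoid G)) :=
    fun w hw => hw.1.ofList_mem_runWords hw.2 (hk w hw.1)
  calc geodesicGrowth (X : Set G) n
      ≤ (runWords X y n k : Set (FreeMonoid G)).ncard :=
        Set.ncard_le_ncard hsub (Finset.finite_toSet _)
    _ ≤ 2 * (n + 1) * ((X.card + 1) * (2 * (n + 1))) ^ k :=
        (Set.ncard_coe_finset _).trans_le (card_runWords_le X y n k)
    _ ≤ 2 * (2 * n) * ((X.card + 1) * (2 * (2 * n))) ^ k := by gcongr <;> omega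
    _ = 4 * n * (4 * (X.card + 1) * n) ^ k := by ring_nf
    _ = 4 * (4 * (X.card + 1)) ^ k * n ^ (k + 1) := by rw [mul_pow, pow_succ]; ring

end Geodesics

section VirtuallyAbelian

variable {G : Type*} [Group G] {A : Subgroup G} {x : G}

theorem finite_conjugatesOf (x : G) [h : (Subgroup.centralizer {x}).FiniteIndex] :
    (conjugatesOf x).Finite := by
  refine Set.finite_of_ncard_ne_zero fun hzero => h.index_ne_zero ?_
  have horbit := MulAction.index_stabilizer (ConjAct G) x
  rw [ConjAct.orbit_eq_carrier_conjClasses, ConjAct.stabilizer_eq_centralizer] at horbit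
  exact horbit.trans hzero

/-- The conjugates of `x` and `x⁻¹` in `G`, as elements of the subgroup `A`. The word length they
define on `A` is invariant under conjugation by `G`. -/
def conjLetters (A : Subgroup G) (x : G) : Set A :=
  (↑) ⁻¹' Group.conjugatesOfSet {x, x⁻¹}

theorem mem_conjLetters {a : A} :
    a ∈ conjLetters A x ↔ ∃ u ∈ ({x, x⁻¹} : Set G), ∃ g, g * u * g⁻¹ = a := by
  simp only [conjLetters, Set.mem_preimage, Group.mem_conjugatesOfSet_iff, isConj_iff]

theorem inv_conjLetters : (conjLetters A x)⁻¹ = conjLetters A x := by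
  have h (a : A) (ha : a ∈ conjLetters A x) : a⁻¹ ∈ conjLetters A x := by
    obtain ⟨u, hu, g, hg⟩ := mem_conjLetters.1 ha
    refine mem_conjLetters.2 ⟨u⁻¹, ?_, g, ?_⟩
    · rcases hu with rfl | rfl <;> simp
    · rw [← conj_inv, hg, Subgroup.coe_inv]
  exact Set.Subset.antisymm (fun a ha => inv_inv a ▸ h _ ha) h

theorem finite_conjLetters [IsMulCommutative A] [A.FiniteIndex] (hx : x ∈ A) :
    (conjLetters A x).Finite := by
  have hA (u : G) (hu : u ∈ A) : (conjugatesOf u).Finite := by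
    have hle : A ≤ Subgroup.centralizer {u} :=
      (Subgroup.le_centralizer A).trans
        (Subgroup.centralizer_le (Set.singleton_subset_iff.2 hu))
    have := Subgroup.finiteIndex_of_le hle
    exact finite_conjugatesOf u
  refine Set.Finite.preimage Subtype.coe_injective.injOn ?_
  rw [Group.conjugatesOfSet, Set.biUnion_pair]
  exact (hA x hx).union (hA x⁻¹ (A.inv_mem hx))

theorem closure_conjLetters_normalClosure (x : G) :
    Subgroup.closure (conjLetters (Subgroup.normalClosure {x}) x) = ⊤ :=
  top_le_iff.1 <| Subgroup.closure_closure_coe_preimage.ge.trans <| Subgroup.closure_mono <|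
    Set.preimage_mono <| Group.conjugatesOfSet_mono <| by simp

theorem exists_mul_eq_of_mul_eq_univ {S T : Set G} (hS : S.Finite) (hTfin : T.Finite)
    (hT : (A : Set G) * T = Set.univ) (hgen : Subgroup.closure (conjLetters A x) = ⊤) :
    ∃ C, ∀ t ∈ T, ∀ s ∈ S, ∃ h ∈ wordBall (conjLetters A x) C, ∃ t' ∈ T, h * t' = t * s := by
  suffices h : ∀ᶠ C in Filter.atTop, ∀ t ∈ T, ∀ s ∈ S,
      ∃ h ∈ wordBall (conjLetters A x) C, ∃ t' ∈ T, h * t' = t * s from h.exists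
  simp only [hTfin.eventually_all, hS.eventually_all]
  intro t _ s _
  obtain ⟨h, hh, t', ht', hprod⟩ := Set.mem_mul.1 (hT ▸ Set.mem_univ (t * s))
  filter_upwards [eventually_mem_wordBall inv_conjLetters hgen ⟨h, hh⟩] with C hC
  exact ⟨⟨h, hh⟩, hC, t', ht', hprod⟩

theorem exists_mem_conjLetters_pow_mul_eq [A.Normal] (hx : x ∈ A) {N : ℕ} {a : G}
    (ha : a = x ^ N ∨ a = (x ^ N)⁻¹) (t : G) : ∃ b ∈ conjLetters A x, (b : G) ^ N * t = t * a := by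
  obtain ⟨u, hu, huA, rfl⟩ : ∃ u ∈ ({x, x⁻¹} : Set G), u ∈ A ∧ u ^ N = a := by
    rcases ha with rfl | rfl
    · exact ⟨x, by simp, hx, rfl⟩
    · exact ⟨x⁻¹, by simp, A.inv_mem hx, inv_pow x N⟩
  refine ⟨⟨t * u * t⁻¹, Subgroup.Normal.conj_mem ‹_› u huA t⟩,
    mem_conjLetters.2 ⟨u, hu, t, rfl⟩, ?_⟩
  rw [conj_pow, inv_mul_cancel_right]

variable [IsMulCommutative A]

theorem exists_prod_eq_pow_mul_mul [A.Normal] [DecidableEq G] (hx : x ∈ A) {S T : Set G} {C N : ℕ}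
    (hT : 1 ∈ T)
    (hST : ∀ t ∈ T, ∀ s ∈ S, ∃ h ∈ wordBall (conjLetters A x) C, ∃ t' ∈ T, h * t' = t * s)
    (w : List G) (hw : ∀ a ∈ w, a ∈ S ∪ {x ^ N, (x ^ N)⁻¹}) :
    ∃ m, m + countOff (x ^ N) w = w.length ∧ ∃ e ∈ wordBall (conjLetters A x) m,
      ∃ f ∈ wordBall (conjLetters A x) (countOff (x ^ N) w * C), ∃ t ∈ T,
        w.prod = e ^ N * f * t := by
  induction w using List.reverseRecOn with
  | nil => exact ⟨0, rfl, 1, one_mem_wordBall, 1, one_mem_wordBall, 1, hT, by simp⟩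
  | append_singleton w a ih =>
    simp only [List.forall_mem_append, List.forall_mem_singleton] at hw
    obtain ⟨m, hm, e, he, f, hf, t, ht, hprod⟩ := ih hw.1
    rw [List.prod_append, List.prod_singleton, hprod, List.length_append, List.length_singleton]
    by_cases hay : a = x ^ N ∨ a = (x ^ N)⁻¹
    · have hcount : countOff (x ^ N) (w ++ [a]) = countOff (x ^ N) w := by
        simp [countOff, List.countP_append, ← not_or, hay]
      obtain ⟨b, hb, hbt⟩ := exists_mem_conjLetters_pow_mul_eq hx hay t
      have hcomm : (e : G) ^ N * f * b ^ N = (e * b : A) ^ N * f := by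
        exact_mod_cast (by rw [mul_pow, mul_right_comm] : e ^ N * f * b ^ N = (e * b) ^ N * f)
      refine ⟨m + 1, by omega, e * b, mul_mem_wordBall he (mem_wordBall_one_of_mem hb), f,
        hcount.symm ▸ hf, t, ht, ?_⟩
      rw [← hcomm, mul_assoc, ← hbt, mul_assoc _ _ t]
    · have hcount : countOff (x ^ N) (w ++ [a]) = countOff (x ^ N) w + 1 := by
        simp [countOff, List.countP_append, ← not_or, hay]
      obtain ⟨h, hh, t', ht', hta⟩ := hST t ht a (hw.2.resolve_right hay)
      refine ⟨m, by omega, e, he, f * h, ?_, t', ht', ?_⟩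
      · rw [hcount, Nat.succ_mul]
        exact mul_mem_wordBall hf hh
      · rw [Subgroup.coe_mul, mul_assoc, ← hta, ← mul_assoc, ← mul_assoc]

variable [A.FiniteIndex] {X : Set G}

theorem exists_pow_mem_wordBall (hx : x ∈ A) {N : ℕ} (hinv : X⁻¹ = X)
    (hgen : Subgroup.closure X = ⊤) (hX : {x ^ N, (x ^ N)⁻¹} ⊆ X) :
    ∃ D, ∀ n, ∀ e ∈ wordBall (conjLetters A x) n, (e : G) ^ N ∈ wordBall X (n + D) := by
  have hpow : ∀ᶠ D in Filter.atTop, ∀ b ∈ conjLetters A x, ∀ i : ℕ,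
      ((b ^ i : A) : G) ^ N ∈ wordBall X (i + D) := by
    rw [(finite_conjLetters hx).eventually_all]
    intro b hb
    obtain ⟨u, hu, g, hg⟩ := mem_conjLetters.1 hb
    have huX : u ^ N ∈ X := hX (by rcases hu with rfl | rfl <;> simp)
    obtain ⟨d, hd⟩ := (eventually_mem_wordBall hinv hgen g).exists
    obtain ⟨d', hd'⟩ := (eventually_mem_wordBall hinv hgen g⁻¹).exists
    filter_upwards [Filter.eventually_ge_atTop (d + d')] with D hD i
    rw [Subgroup.coe_pow, ← hg, ← pow_mul, mul_comm, pow_mul, conj_pow, conj_pow]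
    exact wordBall_mono X (by omega)
      (mul_mem_wordBall (mul_mem_wordBall hd (pow_mem_wordBall huX i)) hd')
  obtain ⟨D, hD⟩ := hpow.exists
  obtain ⟨s, hs⟩ := (finite_conjLetters (A := A) hx).exists_finset_coe
  refine ⟨s.card * D, fun n e he => ?_⟩
  obtain ⟨l, hl, rfl⟩ := exists_prod_pow_eq_of_mem_wordBall (hs ▸ he)
  refine wordBall_mono X ?_ (map_prod_mem_wordBall (A.subtype.comp (powMonoidHom N)) s _
    (fun b => l b + D) fun b hb => hD b (hs ▸ hb) (l b))
  rw [Finset.sum_add_distrib, Finset.sum_const, smul_eq_mul]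
  gcongr

theorem exists_mul_mem_wordBall (hx : x ∈ A) {T : Set G} (hinv : X⁻¹ = X)
    (hgen : Subgroup.closure X = ⊤) (hT : T.Finite) (n : ℕ) :
    ∃ D, ∀ r ∈ wordBall (conjLetters A x) n, ∀ t ∈ T, (r : G) * t ∈ wordBall X D := by
  obtain ⟨d, hd⟩ := ((finite_conjLetters hx).eventually_all.2 fun (b : A) _ =>
    eventually_mem_wordBall hinv hgen (b : G)).exists
  obtain ⟨d', hd'⟩ := (hT.eventually_all.2 fun t _ =>
    eventually_mem_wordBall hinv hgen t).exists
  exact ⟨n * d + d', fun r hr t ht =>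
    mul_mem_wordBall (map_mem_wordBall A.subtype hd hr) (hd' t ht)⟩

theorem exists_countOff_le [A.Normal] [DecidableEq G] (hx : x ∈ A) {S T : Set G} {C N : ℕ}
    (hT : 1 ∈ T) (hTfin : T.Finite)
    (hST : ∀ t ∈ T, ∀ s ∈ S, ∃ h ∈ wordBall (conjLetters A x) C, ∃ t' ∈ T, h * t' = t * s)
    (hN : 0 < N) (hCN : 2 * C ≤ N) (hX : X = S ∪ {x ^ N, (x ^ N)⁻¹}) (hinv : X⁻¹ = X)
    (hgen : Subgroup.closure X = ⊤) :
    ∃ k, ∀ w, IsGeodesicWord X w → countOff (x ^ N) w ≤ k := by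
  obtain ⟨K, hK⟩ := (finite_conjLetters (A := A) hx).exists_finset_coe
  obtain ⟨D, hD⟩ := exists_pow_mem_wordBall (A := A) hx hinv hgen (hX ▸ Set.subset_union_right)
  obtain ⟨D', hD'⟩ := exists_mul_mem_wordBall (A := A) hx hinv hgen hTfin (K.card * N)
  refine ⟨2 * (D + D'), fun w hw => ?_⟩
  obtain ⟨m, hm, e, he, f, hf, t, ht, hprod⟩ := exists_prod_eq_pow_mul_mul hx hT hST w (hX ▸ hw.1)
  obtain ⟨q, hq, r, hr, rfl⟩ := exists_pow_mul_eq_of_mem_wordBall hN (hK ▸ hf)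
  rw [hK] at hq hr
  have hshort : w.prod ∈ wordBall X (m + countOff (x ^ N) w * C / N + D + D') := by
    have hregroup : w.prod = (e * q : A) ^ N * (r * t) := by
      have hA : e ^ N * (q ^ N * r) = (e * q) ^ N * r := by rw [mul_pow, mul_assoc]
      rw [hprod, ← mul_assoc]
      exact_mod_cast congrArg (fun a : A => (a : G) * t) hA
    rw [hregroup]
    exact mul_mem_wordBall (hD _ _ (mul_mem_wordBall he hq)) (hD' r hr t ht)
  have hlen := hw.length_le hshort
  have hhalf : countOff (x ^ N) w * C / N ≤ countOff (x ^ N) w / 2 := by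
    rw [Nat.le_div_iff_mul_le two_pos]
    refine Nat.le_of_mul_le_mul_right ?_ hN
    calc countOff (x ^ N) w * C / N * 2 * N
        = countOff (x ^ N) w * C / N * N * 2 := mul_right_comm _ _ _
      _ ≤ countOff (x ^ N) w * C * 2 := Nat.mul_le_mul_right 2 (Nat.div_mul_le_self _ N)
      _ = countOff (x ^ N) w * (2 * C) := by rw [mul_assoc, mul_comm C]
      _ ≤ countOff (x ^ N) w * N := Nat.mul_le_mul_left _ hCN
  omega

end VirtuallyAbelian

theorem exists_finite_generating_set_countOff_le {G : Type*} [Group G] [Group.FG G] [DecidableEq G]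
    (x : G) [IsMulCommutative (Subgroup.normalClosure {x})]
    [(Subgroup.normalClosure {x}).FiniteIndex] :
    ∃ X : Set G, X.Finite ∧ X⁻¹ = X ∧ Subgroup.closure X = ⊤ ∧
      ∃ y k, ∀ w, IsGeodesicWord X w → countOff y w ≤ k := by
  obtain ⟨S, hS, hSfin⟩ := Group.fg_iff.1 ‹Group.FG G›
  obtain ⟨T, hT, hT1⟩ := (Subgroup.normalClosure {x}).exists_isComplement_right 1
  obtain ⟨C, hC⟩ := exists_mul_eq_of_mul_eq_univ (hSfin.union hSfin.inv) hT.finite_right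
    hT.mul_eq (closure_conjLetters_normalClosure x)
  let N := 2 * C + 1
  let X : Set G := (S ∪ S⁻¹) ∪ {x ^ N, (x ^ N)⁻¹}
  have hinv : X⁻¹ = X := by
    simp only [X, Set.union_inv, inv_inv, Set.inv_insert, Set.inv_singleton, Set.union_comm S,
      Set.pair_comm (x ^ N)]
  have hgen : Subgroup.closure X = ⊤ :=
    top_le_iff.1 (hS.ge.trans (Subgroup.closure_mono fun s hs => Or.inl (Or.inl hs)))
  exact ⟨X, (hSfin.union hSfin.inv).union (Set.toFinite _), hinv, hgen, x ^ N,
    exists_countOff_le (Subgroup.subset_normalClosure (Set.mem_singleton x)) hT1 hT.finite_right hC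
      (Nat.succ_pos _) (Nat.le_succ _) rfl hinv hgen⟩

/-- Main Theorem: if G contains an element x whose normal closure is abelian and of finite
index, then G has a finite symmetric generating set with polynomial geodesic growth. -/
theorem main_theorem_polynomial_geodesic_growth {G : Type*} [Group G] [Group.FG G]
    (x : G)
    (habelian : ∀ u v : G, u ∈ Subgroup.normalClosure {x} →
      v ∈ Subgroup.normalClosure {x} → u * v = v * u)
    (hfi : (Subgroup.normalClosure {x} : Subgroup G).FiniteIndex) :
    ∃ X : Finset G, (∀ g ∈ X, g⁻¹ ∈ X) ∧ Subgroup.closure (X : Set G) = ⊤ ∧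
      ∃ c d : ℕ, ∀ n : ℕ, 1 ≤ n → geodesicGrowth (X : Set G) n ≤ c * n ^ d := by
  classical
  have : IsMulCommutative (Subgroup.normalClosure {x}) :=
    .of_comm fun a b => Subtype.ext (habelian a b a.2 b.2)
  obtain ⟨X, hfin, hinv, hgen, y, k, hk⟩ := exists_finite_generating_set_countOff_le x
  lift X to Finset G using hfin
  exact ⟨X, fun g hg => Finset.mem_coe.1 (hinv.subset (Set.inv_mem_inv.2 hg)), hgen,
    _, _, fun n hn => geodesicGrowth_le_of_countOff_le hk hn⟩
end
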